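/- Let k_1 > k_2 > ⋯ > k_s be integers (s ≥ 1) such that k_j − k_{j+1} ≥ 2 for all 1 ≤ j ≤ s−1. If k_1 is even, then (−1)^{k_1} φ^{k_1} + (−1)^{k_2} φ^{k_2} + ⋯ + (−1)^{k_s} φ^{k_s} > 0. -/

import Mathlib

/-! Since `φ^n + φ^(n-2) + φ^(n-4) + ⋯ = φ^(n+1)`, any alternating sum as in the theorem with all
exponents at most `n` exceeds `-φ^(n+1)` (`neg_phi_zpow_lt_sum`, by induction on the number of
terms). With `k 0` even the leading term is `φ^(k 0)`, and the remaining exponents are at most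
`k 0 - 2`, so the whole sum exceeds `φ^(k 0) - φ^(k 0 - 1) > 0`. -/

/-- The golden ratio φ = (1+√5)/2. -/
noncomputable def goldenPhi : ℝ := (1 + Real.sqrt 5) / 2

lemma one_lt_goldenPhi : 1 < goldenPhi := Real.one_lt_goldenRatio

lemma goldenPhi_zpow_add (n : ℤ) :
    goldenPhi ^ (n + 1) = goldenPhi ^ n + goldenPhi ^ (n - 1) := by
  have h0 : goldenPhi ≠ 0 := (zero_lt_one.trans one_lt_goldenPhi).ne'
  have hsq : goldenPhi ^ 2 = goldenPhi + 1 := Real.goldenRatio_sq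
  rw [zpow_add_one₀ h0, zpow_sub_one₀ h0]
  field_simp
  linear_combination hsq

/-- The hypothesis on `k 0` is conditional so that the empty sum is covered, which lets the
induction start at `s = 0`. -/
lemma neg_phi_zpow_lt_sum (s : ℕ) : ∀ (k : ℕ → ℤ) (n : ℤ),
    (∀ j, j + 1 < s → k j - k (j + 1) ≥ 2) → (0 < s → k 0 ≤ n) →
    -goldenPhi ^ (n + 1) < ∑ j ∈ Finset.range s, (-1 : ℝ) ^ (k j) * goldenPhi ^ (k j) := by
  have hpos : 0 < goldenPhi := zero_lt_one.trans one_lt_goldenPhi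
  induction s with
  | zero =>
    intro k n _ _
    simpa using zpow_pos hpos (n + 1)
  | succ s ih =>
    intro k n hgap hn
    rw [Finset.sum_range_succ']
    have htail := ih (fun j => k (j + 1)) (k 0 - 2)
      (fun j hj => hgap (j + 1) (by omega))
      (fun h => by have := hgap 0 (by omega); simp only [zero_add] at *; omega)
    have hexp : k 0 - 2 + 1 = k 0 - 1 := by ring
    rw [hexp] at htail
    have hmono : goldenPhi ^ (k 0 + 1) ≤ goldenPhi ^ (n + 1) :=
      zpow_le_zpow_right₀ one_lt_goldenPhi.le (by have := hn (by omega); omega)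
    have hrec := goldenPhi_zpow_add (k 0)
    have hp := zpow_pos hpos (k 0)
    have hhead : -goldenPhi ^ (k 0) ≤ (-1 : ℝ) ^ (k 0) * goldenPhi ^ (k 0) := by
      rcases Int.even_or_odd (k 0) with h | h
      · rw [h.neg_one_zpow]; linarith
      · rw [h.neg_one_zpow]; linarith
    linarith

/-- Lemma 2 (even case): for integers `k 0 > k 1 > ⋯ > k (s-1)` with consecutive
gaps at least 2 and `k 0` even, `(−1)^{k_1} φ^{k_1} + ⋯ + (−1)^{k_s} φ^{k_s} > 0`. -/
theorem stmt_9 (s : ℕ) (hs : 1 ≤ s) (k : ℕ → ℤ)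
    (hgap : ∀ j, j + 1 < s → k j - k (j + 1) ≥ 2)
    (heven : Even (k 0)) :
    0 < ∑ j ∈ Finset.range s, (-1 : ℝ) ^ (k j) * goldenPhi ^ (k j) := by
  obtain ⟨s, rfl⟩ := Nat.exists_eq_add_of_le' hs
  rw [Finset.sum_range_succ', heven.neg_one_zpow]
  have htail := neg_phi_zpow_lt_sum s (fun j => k (j + 1)) (k 0 - 2)
    (fun j hj => hgap (j + 1) (by omega))
    (fun h => by have := hgap 0 (by omega); simp only [zero_add] at *; omega)
  have hexp : k 0 - 2 + 1 = k 0 - 1 := by ring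
  rw [hexp] at htail
  have hlt : goldenPhi ^ (k 0 - 1) < goldenPhi ^ (k 0) :=
    zpow_lt_zpow_right₀ one_lt_goldenPhi (by omega)
  linarith
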